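/- For all positive integers d and n with d + 1 ≤ n ≤ 2^d, there exists a 0/1-polytope P ⊆ ℝ^d of dimension d with exactly n vertices and at most 3d facets (where facets are its (d−1)-dimensional faces); consequently, the minimum number of facets of a d-dimensional 0/1-polytope with n vertices is at most 3d. -/

import Mathlib

/-!
For large `n`, take the first `n` points of the cube in the lexicographic order (equivalently, up
to reversing coordinates, a revlex-initial set). If `w` is the last of these points, their convex
hull is cut out of the unit cube by one extra inequality
`x i ≤ ∑ (1 - x j)` (sum over `j` more significant than `i` with `w j = 1`) for each `i` with
`w i = 0`. This is proved by induction, prepending a most significant bit (`hull_top`, `hull_bot`),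
and gives at most `3 d` inequalities in total. When `2 ^ (d - 1) < n` the hull contains `0` and all
unit vectors, so it is full-dimensional.

For small `n`, a pyramid over a polytope of one dimension less has one vertex more and is described
by two more inequalities (`Describes.pyramid`); iterating reaches the lexicographic range
or a point.

Finally, a facet of a full-dimensional polytope `{x | ∀ j, f j x ≤ b j}` is the set where one of the
inequalities is tight (`facet_eq`), so there are at most as many nonempty facets as inequalities.
The empty face has `adim` zero and hence counts as a facet when `d = 1`; there only two
inequalities are needed.
-/

open Finset

/-- The set of 0/1-vectors in ℝ^d. -/
def ZeroOne (d : ℕ) : Set (Fin d → ℝ) := {x | ∀ i, x i = 0 ∨ x i = 1}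

/-- `x` is reverse-lexicographically smaller than `y`:
there is an index `m` with `x m < y m` and `x i = y i` for all `i > m`
(equivalently, `x m < y m` for `m` the largest index where `x` and `y` differ). -/
def RlexLt {d : ℕ} (x y : Fin d → ℝ) : Prop :=
  ∃ m : Fin d, x m < y m ∧ ∀ i : Fin d, m < i → x i = y i

/-- `X(v)`: the 0/1-points revlex-smaller than `v`. -/
def Xset {d : ℕ} (v : Fin d → ℝ) : Set (Fin d → ℝ) :=
  {x | x ∈ ZeroOne d ∧ RlexLt x v}

/-- The revlex-initial 0/1-polytope `P(v) = conv X(v)`. -/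
noncomputable def Pset {d : ℕ} (v : Fin d → ℝ) : Set (Fin d → ℝ) :=
  convexHull ℝ (Xset v)

/-- `Sig(v)`: the support of `v` (the indices of its one-entries). -/
noncomputable def Sig {d : ℕ} (v : Fin d → ℝ) : Finset (Fin d) :=
  @Finset.filter (Fin d) (fun i => v i = 1) (Classical.decPred _) Finset.univ

/-- `Sig_{>i}(v)`: the elements of `Sig(v)` above `i`. -/
noncomputable def SigGt {d : ℕ} (v : Fin d → ℝ) (i : Fin d) : Finset (Fin d) :=
  (Sig v).filter (fun j => i < j)

/-- The dimension of the affine hull of a set in ℝ^d. -/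
noncomputable def adim {d : ℕ} (s : Set (Fin d → ℝ)) : ℕ :=
  Module.finrank ℝ (affineSpan ℝ s).direction

/-- A face of a polytope: a convex extreme subset. -/
def IsFaceOf {d : ℕ} (P F : Set (Fin d → ℝ)) : Prop :=
  Convex ℝ F ∧ IsExtreme ℝ P F

/-- The number of indices satisfying a predicate. -/
noncomputable def cnt {d : ℕ} (p : Fin d → Prop) : ℕ :=
  (@Finset.filter (Fin d) p (Classical.decPred _) Finset.univ).card


/-! ### Joining two point sets in consecutive slices -/

/-- `A` placed in the facet `x 0 = 0` together with `B` placed in the facet `x 0 = 1`. -/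
def joinSet {k : ℕ} (A B : Set (Fin k → ℝ)) : Set (Fin (k + 1) → ℝ) :=
  (fun x => (Fin.cons 0 x : Fin (k + 1) → ℝ)) '' A ∪
    (fun x => (Fin.cons 1 x : Fin (k + 1) → ℝ)) '' B

lemma convex_halfspaces {k : ℕ} {ι : Type} (f : ι → ((Fin k → ℝ) →ₗ[ℝ] ℝ)) (b : ι → ℝ) :
    Convex ℝ {x | ∀ p, f p x ≤ b p} := by
  intro x hx y hy s t hs ht hst p
  have h1 := mul_le_mul_of_nonneg_left (hx p) hs
  have h2 := mul_le_mul_of_nonneg_left (hy p) ht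
  simp only [map_add, map_smul, smul_eq_mul]
  have : b p = s * b p + t * b p := by rw [← add_mul, hst, one_mul]
  linarith

lemma convex_cons_preimage {k : ℕ} {S : Set (Fin (k + 1) → ℝ)} (hS : Convex ℝ S) (a : ℝ) :
    Convex ℝ {x : Fin k → ℝ | (Fin.cons a x : Fin (k + 1) → ℝ) ∈ S} := by
  intro x hx y hy s t hs ht hst
  have h := hS hx hy hs ht hst
  have e : (s • (Fin.cons a x : Fin (k + 1) → ℝ) + t • (Fin.cons a y : Fin (k + 1) → ℝ))
      = Fin.cons a (s • x + t • y) := by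
    ext i
    refine Fin.cases ?_ (fun i => ?_) i
    · simp [← add_mul, hst]
    · simp
  rw [e] at h
  exact h

lemma cons_zero_mem_hull {k : ℕ} {A B : Set (Fin k → ℝ)} {y : Fin k → ℝ}
    (hy : y ∈ convexHull ℝ A) :
    (Fin.cons 0 y : Fin (k + 1) → ℝ) ∈ convexHull ℝ (joinSet A B) := by
  have hsub : A ⊆ {x : Fin k → ℝ |
      (Fin.cons 0 x : Fin (k + 1) → ℝ) ∈ convexHull ℝ (joinSet A B)} :=
    fun x hx => subset_convexHull ℝ (joinSet A B) (Or.inl ⟨x, hx, rfl⟩)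
  exact convexHull_min hsub (convex_cons_preimage (convex_convexHull ℝ _) 0) hy

lemma cons_one_mem_hull {k : ℕ} {A B : Set (Fin k → ℝ)} {y : Fin k → ℝ}
    (hy : y ∈ convexHull ℝ B) :
    (Fin.cons 1 y : Fin (k + 1) → ℝ) ∈ convexHull ℝ (joinSet A B) := by
  have hsub : B ⊆ {x : Fin k → ℝ |
      (Fin.cons 1 x : Fin (k + 1) → ℝ) ∈ convexHull ℝ (joinSet A B)} :=
    fun x hx => subset_convexHull ℝ (joinSet A B) (Or.inr ⟨x, hx, rfl⟩)
  exact convexHull_min hsub (convex_cons_preimage (convex_convexHull ℝ _) 1) hy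

lemma cons_mem_hull {k : ℕ} {A B : Set (Fin k → ℝ)} {x y z : Fin k → ℝ} {t : ℝ}
    (ht0 : 0 ≤ t) (ht1 : t ≤ 1)
    (hy : y ∈ convexHull ℝ A) (hz : z ∈ convexHull ℝ B)
    (hx : ∀ i, x i = (1 - t) * y i + t * z i) :
    (Fin.cons t x : Fin (k + 1) → ℝ) ∈ convexHull ℝ (joinSet A B) := by
  have h := convex_convexHull ℝ (joinSet A B) (cons_zero_mem_hull (B := B) hy)
    (cons_one_mem_hull (A := A) hz) (sub_nonneg.2 ht1) ht0 (by ring)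
  convert h using 1
  ext i
  refine Fin.cases ?_ (fun i => ?_) i
  · simp
  · simp [hx]

lemma ZeroOne_finite (k : ℕ) : (ZeroOne k).Finite := by
  have : ZeroOne k = Set.pi Set.univ (fun _ : Fin k => ({0, 1} : Set ℝ)) := by
    ext x; simp [ZeroOne]
  rw [this]
  exact Set.Finite.pi fun _ => by simp

lemma joinSet_subset {k : ℕ} {A B : Set (Fin k → ℝ)} (hA : A ⊆ ZeroOne k)
    (hB : B ⊆ ZeroOne k) : joinSet A B ⊆ ZeroOne (k + 1) := by
  rintro _ (⟨x, hx, rfl⟩ | ⟨x, hx, rfl⟩) i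
  · exact Fin.cases (by simp) (fun i => by simpa using hA hx i) i
  · exact Fin.cases (by simp) (fun i => by simpa using hB hx i) i

lemma joinSet_ncard {k : ℕ} {A B : Set (Fin k → ℝ)} (hA : A ⊆ ZeroOne k)
    (hB : B ⊆ ZeroOne k) : (joinSet A B).ncard = A.ncard + B.ncard := by
  have fA := (ZeroOne_finite k).subset hA
  have fB := (ZeroOne_finite k).subset hB
  unfold joinSet
  rw [Set.ncard_union_eq _ (fA.image _) (fB.image _),
    Set.ncard_image_of_injective A
      (Fin.cons_right_injective (α := fun _ : Fin (k + 1) => ℝ) (0 : ℝ)),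
    Set.ncard_image_of_injective B
      (Fin.cons_right_injective (α := fun _ : Fin (k + 1) => ℝ) (1 : ℝ))]
  rw [Set.disjoint_left]
  rintro _ ⟨x, hx, rfl⟩ ⟨y, hy, h⟩
  have := congrFun h 0
  simp at this

lemma ZeroOne_succ (k : ℕ) : ZeroOne (k + 1) = joinSet (ZeroOne k) (ZeroOne k) := by
  refine Set.Subset.antisymm ?_ (joinSet_subset subset_rfl subset_rfl)
  intro x hx
  have ht : Fin.tail x ∈ ZeroOne k := fun i => hx i.succ
  rcases hx 0 with h | h
  · exact Or.inl ⟨_, ht, by simp only [← h]; exact Fin.cons_self_tail x⟩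
  · exact Or.inr ⟨_, ht, by simp only [← h]; exact Fin.cons_self_tail x⟩

lemma ZeroOne_ncard (k : ℕ) : (ZeroOne k).ncard = 2 ^ k := by
  induction k with
  | zero =>
    have : ZeroOne 0 = {0} := by
      ext x; simp [ZeroOne]; exact Subsingleton.elim _ _
    rw [this]; simp
  | succ k ih => rw [ZeroOne_succ, joinSet_ncard subset_rfl subset_rfl, ih]; ring

lemma hull_ZeroOne_of_box {k : ℕ} {x : Fin k → ℝ} (hx : ∀ i, 0 ≤ x i ∧ x i ≤ 1) :
    x ∈ convexHull ℝ (ZeroOne k) := by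
  induction k with
  | zero => exact subset_convexHull ℝ _ fun i => i.elim0
  | succ k ih =>
    rw [ZeroOne_succ, ← Fin.cons_self_tail x]
    have h := ih (x := Fin.tail x) fun i => hx i.succ
    exact cons_mem_hull (hx 0).1 (hx 0).2 h h fun i => by ring

lemma box_of_hull {k : ℕ} {V : Set (Fin k → ℝ)} (hV : V ⊆ ZeroOne k) {x : Fin k → ℝ}
    (hx : x ∈ convexHull ℝ V) (i : Fin k) : 0 ≤ x i ∧ x i ≤ 1 := by
  have h : convexHull ℝ V ⊆ Set.Icc 0 1 := by
    refine convexHull_min (fun v hv => ?_) (convex_Icc _ _)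
    constructor <;> intro i <;> rcases hV hv i with h | h <;> simp [h]
  exact ⟨(h hx).1 i, (h hx).2 i⟩

/-! ### Lex-initial 0/1-polytopes -/

/-- The polytope with box constraints and, for each `i`, one further inequality
`x i ≤ e i + ∑ j, c i j * (1 - x j)`. Taking `e i = 1` makes that
inequality redundant. -/
def lexPoly {k : ℕ} (e : Fin k → ℕ) (c : Fin k → Fin k → ℕ) : Set (Fin k → ℝ) :=
  {x | ∀ i, 0 ≤ x i ∧ x i ≤ 1 ∧ x i ≤ e i + ∑ j, (c i j : ℝ) * (1 - x j)}

/-- The defining functionals of `lexPoly`: for each `i`, those of `0 ≤ x i`, of `x i ≤ 1` and of the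
further inequality. -/
noncomputable def lexFun {k : ℕ} (c : Fin k → Fin k → ℕ) :
    Fin k × Fin 3 → ((Fin k → ℝ) →ₗ[ℝ] ℝ) := fun p =>
  ![-LinearMap.proj p.1, LinearMap.proj p.1,
    LinearMap.proj p.1 + ∑ j, (c p.1 j : ℝ) • LinearMap.proj j] p.2

/-- The right-hand sides of the defining inequalities of `lexPoly`. -/
noncomputable def lexRhs {k : ℕ} (e : Fin k → ℕ) (c : Fin k → Fin k → ℕ) :
    Fin k × Fin 3 → ℝ := fun p =>
  ![0, 1, e p.1 + ∑ j, (c p.1 j : ℝ)] p.2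

lemma lexPoly_eq {k : ℕ} (e : Fin k → ℕ) (c : Fin k → Fin k → ℕ) :
    lexPoly e c = {x | ∀ p, lexFun c p x ≤ lexRhs e c p} := by
  ext x
  simp only [lexPoly, Set.mem_ofPred_eq, Prod.forall, Fin.forall_fin_succ, lexFun, lexRhs]
  refine forall_congr' fun i => ?_
  simp [mul_sub, Finset.sum_sub_distrib]
  intro _ _
  constructor <;> intro h <;> linarith

lemma convex_lexPoly {k : ℕ} (e : Fin k → ℕ) (c : Fin k → Fin k → ℕ) :
    Convex ℝ (lexPoly e c) := by
  rw [lexPoly_eq]; exact convex_halfspaces _ _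

/-- Prepending a most significant bit `1`: the whole cube at height `0` and `X` at height `1`.
Since `lexPoly` is closed downwards, `(t, x)` splits as `(1 - t) (0, y) + t (1, z)` with `t z`
the smallest possible choice `max 0 (x - (1 - t))`. -/
lemma hull_top {k : ℕ} {X : Set (Fin k → ℝ)} {e : Fin k → ℕ} {c : Fin k → Fin k → ℕ}
    (hX : convexHull ℝ X = lexPoly e c) :
    convexHull ℝ (joinSet (ZeroOne k) X) =
      lexPoly (Fin.cons 1 e : Fin (k + 1) → ℕ)
        (Fin.cons 0 (fun i => (Fin.cons 1 (c i) : Fin (k + 1) → ℕ)) :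
          Fin (k + 1) → Fin (k + 1) → ℕ) := by
  apply Set.Subset.antisymm
  · refine convexHull_min ?_ (convex_lexPoly _ _)
    rintro _ (⟨x, hx, rfl⟩ | ⟨x, hx, rfl⟩) i
    · refine Fin.cases (by simp) (fun i => ?_) i
      have hb : ∀ i, 0 ≤ x i ∧ x i ≤ 1 := fun i => by rcases hx i with h | h <;> simp [h]
      have : 0 ≤ ∑ j, (c i j : ℝ) * (1 - x j) :=
        Finset.sum_nonneg fun j _ => mul_nonneg (by positivity) (by linarith [hb j])
      have he : (0 : ℝ) ≤ e i := by positivity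
      refine ⟨by simpa using (hb i).1, by simpa using (hb i).2, ?_⟩
      simp [Fin.sum_univ_succ]
      linarith [(hb i).2]
    · refine Fin.cases (by simp) (fun i => ?_) i
      have := (hX ▸ subset_convexHull ℝ X hx : x ∈ lexPoly e c) i
      simpa [Fin.sum_univ_succ] using this
  · intro p hp
    obtain ⟨t, x, rfl⟩ : ∃ t x, p = (Fin.cons t x : Fin (k + 1) → ℝ) :=
      ⟨p 0, Fin.tail p, (Fin.cons_self_tail p).symm⟩
    have ht := hp 0
    simp only [Fin.cons_zero] at ht
    obtain ⟨ht0, ht1, -⟩ := ht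
    have hx : ∀ i, 0 ≤ x i ∧ x i ≤ 1 ∧
        x i ≤ e i + ((1 - t) + ∑ j, (c i j : ℝ) * (1 - x j)) := fun i => by
      have := hp i.succ
      simpa [Fin.sum_univ_succ] using this
    have h0 : (0 : Fin k → ℝ) ∈ lexPoly e c := fun i => by
      have : 0 ≤ ∑ j, (c i j : ℝ) := by positivity
      have he : (0 : ℝ) ≤ e i := by positivity
      simp; linarith
    set u : Fin k → ℝ := fun i => max 0 (x i - (1 - t)) with hu
    have hu0 : ∀ i, 0 ≤ u i := fun i => le_max_left _ _
    have hut : ∀ i, u i ≤ t := fun i => max_le ht0 (by linarith [(hx i).2.1])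
    have hux : ∀ i, u i ≤ x i := fun i => max_le (hx i).1 (by linarith)
    have hxu : ∀ i, x i - u i ≤ 1 - t := fun i => by linarith [le_max_right 0 (x i - (1 - t))]
    have huc : ∀ i, u i ≤ t * e i + ∑ j, (c i j : ℝ) * (t - u j) := fun i => by
      have hnn : ∀ j ∈ Finset.univ, 0 ≤ (c i j : ℝ) * (t - u j) := fun j _ =>
        mul_nonneg (by positivity) (by linarith [hut j])
      have hs := Finset.sum_nonneg hnn
      have het : 0 ≤ t * e i := by positivity
      by_cases he : 1 ≤ e i
      · have : (1 : ℝ) ≤ e i := by exact_mod_cast he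
        nlinarith [hut i]
      have he0 : e i = 0 := by omega
      -- Either some summand equals `t` times its coefficient and dominates `u i`, or `u` is given by
      -- `x - (1 - t)` wherever the coefficient is nonzero and the inequality for `x` applies.
      by_cases hj : ∃ j, 1 ≤ c i j ∧ u j = 0
      · obtain ⟨j, hj1, hj2⟩ := hj
        have h1 := Finset.single_le_sum hnn (Finset.mem_univ j)
        have h2 : (1 : ℝ) ≤ c i j := by exact_mod_cast hj1
        rw [hj2] at h1
        nlinarith [hut i]
      · push Not at hj
        have hsum : ∑ j, (c i j : ℝ) * (t - u j) = ∑ j, (c i j : ℝ) * (1 - x j) := by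
          refine Finset.sum_congr rfl fun j _ => ?_
          rcases Nat.eq_zero_or_pos (c i j) with h | h
          · simp [h]
          · have h3 : u j = x j - (1 - t) := by
              rcases max_choice 0 (x j - (1 - t)) with h4 | h4
              · exact absurd h4 (hj j h)
              · exact h4
            rw [h3]; ring
        refine max_le (by linarith) ?_
        rw [hsum, he0]
        have := (hx i).2.2
        rw [he0] at this
        push_cast at this ⊢
        linarith
    obtain ⟨z, hz, hzu⟩ : ∃ z ∈ lexPoly e c, ∀ i, u i = t * z i := by
      rcases ht0.eq_or_lt with h | h
      · refine ⟨0, h0, fun i => ?_⟩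
        have := hut i
        have := hu0 i
        simp; linarith
      · refine ⟨fun i => u i / t, fun i => ⟨div_nonneg (hu0 i) ht0, ?_, ?_⟩, fun i => ?_⟩
        · rw [div_le_one h]; exact hut i
        · rw [div_le_iff₀ h, add_mul, Finset.sum_mul]
          refine (huc i).trans_eq ?_
          congr 1
          · ring
          · refine Finset.sum_congr rfl fun j _ => ?_
            field_simp
        · field_simp
    obtain ⟨y, hy, hyu⟩ : ∃ y ∈ convexHull ℝ (ZeroOne k), ∀ i, x i - u i = (1 - t) * y i := by
      rcases ht1.eq_or_lt with h | h
      · refine ⟨0, hull_ZeroOne_of_box (by simp), fun i => ?_⟩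
        have := hux i
        have := hxu i
        simp; linarith
      · have h' : 0 < 1 - t := by linarith
        refine ⟨fun i => (x i - u i) / (1 - t), hull_ZeroOne_of_box fun i => ⟨?_, ?_⟩,
          fun i => ?_⟩
        · exact div_nonneg (by linarith [hux i]) h'.le
        · rw [div_le_one h']; exact hxu i
        · field_simp
    exact cons_mem_hull ht0 ht1 hy (hX ▸ hz) fun i => by rw [← hzu, ← hyu]; ring

/-- Prepending a most significant bit `0`: the new constraint `x 0 ≤ 0` keeps `X` at height `0`. -/
lemma hull_bot {k : ℕ} {X : Set (Fin k → ℝ)} {e : Fin k → ℕ} {c : Fin k → Fin k → ℕ}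
    (hX : convexHull ℝ X = lexPoly e c) :
    convexHull ℝ (joinSet X ∅) =
      lexPoly (Fin.cons 0 e : Fin (k + 1) → ℕ)
        (Fin.cons 0 (fun i => (Fin.cons 0 (c i) : Fin (k + 1) → ℕ)) :
          Fin (k + 1) → Fin (k + 1) → ℕ) := by
  apply Set.Subset.antisymm
  · refine convexHull_min ?_ (convex_lexPoly _ _)
    rintro _ (⟨x, hx, rfl⟩ | ⟨x, hx, rfl⟩) i
    · refine Fin.cases (by simp) (fun i => ?_) i
      have := (hX ▸ subset_convexHull ℝ X hx : x ∈ lexPoly e c) i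
      simpa [Fin.sum_univ_succ] using this
    · exact hx.elim
  · intro p hp
    obtain ⟨t, x, rfl⟩ : ∃ t x, p = (Fin.cons t x : Fin (k + 1) → ℝ) :=
      ⟨p 0, Fin.tail p, (Fin.cons_self_tail p).symm⟩
    have ht := hp 0
    simp at ht
    obtain rfl : t = 0 := le_antisymm ht.2.2 ht.1
    refine cons_zero_mem_hull (hX ▸ fun i => ?_)
    have := hp i.succ
    simpa [Fin.sum_univ_succ] using this

/-- The set produced by the induction consists of the first `n` points of the cube in the
lexicographic order; only its cardinality and the description of its hull are recorded. -/
lemma exists_lex (k n : ℕ) (h1 : 1 ≤ n) (h2 : n ≤ 2 ^ k) :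
    ∃ (X : Set (Fin k → ℝ)) (e : Fin k → ℕ) (c : Fin k → Fin k → ℕ),
      X ⊆ ZeroOne k ∧ 0 ∈ X ∧ X.ncard = n ∧ convexHull ℝ X = lexPoly e c := by
  induction k generalizing n with
  | zero =>
    refine ⟨{0}, 0, 0, fun _ _ i => i.elim0, rfl, ?_, ?_⟩
    · simp at h2 ⊢; omega
    · ext x
      simp [lexPoly]; exact Subsingleton.elim _ _
  | succ k ih =>
    rcases le_or_gt n (2 ^ k) with h | h
    · obtain ⟨X, e, c, hX, h0, hn, hh⟩ := ih n h1 h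
      refine ⟨_, _, _, joinSet_subset hX (Set.empty_subset _), Or.inl ⟨0, h0, ?_⟩, ?_,
        hull_bot hh⟩
      · ext i; exact Fin.cases (by simp) (by simp) i
      · rw [joinSet_ncard hX (Set.empty_subset _), hn]; simp
    · obtain ⟨X, e, c, hX, h0, hn, hh⟩ := ih (n - 2 ^ k) (by omega) (by rw [pow_succ] at h2; omega)
      refine ⟨_, _, _, joinSet_subset subset_rfl hX, Or.inl ⟨0, fun i => by simp, ?_⟩, ?_,
        hull_top hh⟩
      · ext i; exact Fin.cases (by simp) (by simp) i
      · rw [joinSet_ncard subset_rfl hX, hn, ZeroOne_ncard]; omega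

/-! ### Pyramids and the existence of a description -/

/-- `V` is a set of `n` cube points containing `0` and the unit vectors, whose convex hull is cut
out by `m` linear inequalities. Containing these points makes the hull full-dimensional. -/
def Describes (d n m : ℕ) (V : Set (Fin d → ℝ)) : Prop :=
  V ⊆ ZeroOne d ∧ 0 ∈ V ∧ (∀ i, Pi.single i 1 ∈ V) ∧ V.ncard = n ∧
    ∃ (ι : Type) (_ : Fintype ι) (f : ι → ((Fin d → ℝ) →ₗ[ℝ] ℝ)) (b : ι → ℝ),
      Fintype.card ι = m ∧ convexHull ℝ V = {x | ∀ j, f j x ≤ b j}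

/-- The pyramid over `V` with apex at the new unit vector. -/
lemma Describes.pyramid {d n m : ℕ} {V : Set (Fin d → ℝ)} (h : Describes d n m V) :
    Describes (d + 1) (n + 1) (m + 2) (joinSet V {0}) := by
  obtain ⟨hV, h0, hs, hn, ι, _, f, b, hm, hh⟩ := h
  have hz : ({0} : Set (Fin d → ℝ)) ⊆ ZeroOne d := fun x hx i => by
    rw [Set.mem_singleton_iff.1 hx]; simp
  let T : (Fin (d + 1) → ℝ) →ₗ[ℝ] (Fin d → ℝ) := LinearMap.funLeft ℝ ℝ Fin.succ
  have hT : ∀ t x, T (Fin.cons t x) = x := fun t x => by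
    ext i; simp [T, LinearMap.funLeft_apply]
  let g : ι ⊕ Bool → ((Fin (d + 1) → ℝ) →ₗ[ℝ] ℝ) := Sum.elim
    (fun j => f j ∘ₗ T + b j • LinearMap.proj 0)
    (fun s => if s then LinearMap.proj 0 else -LinearMap.proj 0)
  let r : ι ⊕ Bool → ℝ := Sum.elim b (fun s => if s then 1 else 0)
  refine ⟨joinSet_subset hV hz, Or.inl ⟨0, h0, ?_⟩, fun i => ?_, ?_,
    ι ⊕ Bool, inferInstance, g, r, by simp [hm], ?_⟩
  · ext i; exact Fin.cases (by simp) (by simp) i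
  · refine Fin.cases (Or.inr ⟨0, rfl, ?_⟩) (fun i => Or.inl ⟨_, hs i, ?_⟩) i
    · ext j; exact Fin.cases (by simp) (by simp) j
    · ext j
      refine Fin.cases (by simp) (fun j => ?_) j
      simp [Pi.single_apply]
  · rw [joinSet_ncard hV hz, hn]; simp
  · apply Set.Subset.antisymm
    · refine convexHull_min ?_ (convex_halfspaces _ _)
      rintro _ (⟨x, hx, rfl⟩ | ⟨x, hx, rfl⟩) (j | s)
      · have := (hh ▸ subset_convexHull ℝ V hx : x ∈ {x | ∀ j, f j x ≤ b j}) j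
        simpa [g, r, hT] using this
      · cases s <;> simp [g, r]
      · rw [Set.mem_singleton_iff.1 hx]
        simp [g, r, hT]
      · cases s <;> simp [g, r]
    · intro p hp
      obtain ⟨t, x, rfl⟩ : ∃ t x, p = (Fin.cons t x : Fin (d + 1) → ℝ) :=
        ⟨p 0, Fin.tail p, (Fin.cons_self_tail p).symm⟩
      have ht0 : 0 ≤ t := by simpa [g, r] using hp (Sum.inr false)
      have ht1 : t ≤ 1 := by simpa [g, r] using hp (Sum.inr true)
      have hf : ∀ j, f j x + b j * t ≤ b j := fun j => by
        simpa [g, r, hT] using hp (Sum.inl j)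
      obtain ⟨y, hy, hyx⟩ : ∃ y ∈ convexHull ℝ V, ∀ i, x i = (1 - t) * y i := by
        rcases ht1.eq_or_lt with h | h
        · refine ⟨0, subset_convexHull ℝ _ h0, fun i => ?_⟩
          -- At height `1` the vector `x` is a recession direction of a bounded polytope.
          subst h
          by_contra hne
          have hxi : x i ≠ 0 := by simpa using hne
          have h0' : (0 : Fin d → ℝ) ∈ {x | ∀ j, f j x ≤ b j} :=
            hh ▸ subset_convexHull ℝ V h0
          have hmem : (2 / |x i|) • x ∈ convexHull ℝ V := by
            rw [hh]
            intro j
            have hb : 0 ≤ b j := by simpa using h0' j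
            have hfj : f j x ≤ 0 := by linarith [hf j]
            rw [map_smul, smul_eq_mul]
            have : 0 ≤ 2 / |x i| := by positivity
            nlinarith
          have hbox := box_of_hull hV hmem i
          simp only [Pi.smul_apply, smul_eq_mul] at hbox
          have habs : |2 / |x i| * x i| = 2 := by
            rw [abs_mul, abs_div, abs_abs, abs_two]
            have : |x i| ≠ 0 := by simpa using hxi
            field_simp
          rw [abs_of_nonneg hbox.1] at habs
          linarith [hbox.2]
        · have h' : 0 < 1 - t := by linarith
          refine ⟨(1 - t)⁻¹ • x, ?_, fun i => ?_⟩
          · rw [hh]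
            intro j
            rw [map_smul, smul_eq_mul, inv_mul_le_iff₀ h']
            linarith [hf j]
          · simp; field_simp
      exact cons_mem_hull ht0 ht1 hy (subset_convexHull ℝ _ rfl) fun i => by simp [hyx]

/-- Large `n` comes from a lex-initial set, small `n` from a pyramid. One inequality is to spare
in dimension one, where the empty face also has the dimension `0` of a facet. -/
lemma exists_describes (d n : ℕ) (h1 : d + 1 ≤ n) (h2 : n ≤ 2 ^ d) :
    ∃ V m, Describes d n m V ∧ m ≤ 3 * d ∧ (d = 1 → m ≤ 2) := by
  induction d generalizing n with
  | zero =>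
    refine ⟨{0}, 0, ⟨fun _ _ i => i.elim0, rfl, fun i => i.elim0, ?_, Empty, inferInstance,
      fun i => i.elim, fun i => i.elim, by simp, ?_⟩, by simp, by simp⟩
    · simp at h2 ⊢; omega
    · ext x
      simp; exact Subsingleton.elim _ _
  | succ d ih =>
    rcases le_or_gt (n - 1) (2 ^ d) with h | h
    · obtain ⟨V, m, hV, hm, -⟩ := ih (n - 1) (by omega) h
      refine ⟨joinSet V {0}, m + 2, ?_, by omega, by omega⟩
      have := hV.pyramid
      rwa [Nat.sub_add_cancel (by omega)] at this
    · obtain ⟨X, e, c, hX, h0, hn, hh⟩ :=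
        exists_lex d (n - 2 ^ d) (by omega) (by rw [pow_succ] at h2; omega)
      refine ⟨joinSet (ZeroOne d) X, 3 * (d + 1),
        ⟨joinSet_subset subset_rfl hX, Or.inl ⟨0, fun i => by simp, ?_⟩, fun i => ?_, ?_,
          Fin (d + 1) × Fin 3, inferInstance, _, _, by simp [mul_comm],
          (hull_top hh).trans (lexPoly_eq _ _)⟩, le_rfl, ?_⟩
      · ext i; exact Fin.cases (by simp) (by simp) i
      · refine Fin.cases (Or.inr ⟨0, h0, ?_⟩) (fun i => Or.inl ⟨Pi.single i 1, ?_, ?_⟩) i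
        · ext j; exact Fin.cases (by simp) (by simp) j
        · intro j
          by_cases hj : j = i <;> simp [hj]
        · ext j
          refine Fin.cases (by simp) (fun j => ?_) j
          simp [Pi.single_apply]
      · rw [joinSet_ncard subset_rfl hX, hn, ZeroOne_ncard]; omega
      · intro hd
        obtain rfl : d = 0 := by omega
        simp at h h2; omega

/-! ### Faces of a polytope given by inequalities -/

lemma adim_eq_of_unit {d : ℕ} {P : Set (Fin d → ℝ)} (h0 : (0 : Fin d → ℝ) ∈ P)
    (hs : ∀ i, Pi.single i 1 ∈ P) : adim P = d := by
  have : (affineSpan ℝ P).direction = ⊤ := by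
    rw [direction_affineSpan, eq_top_iff, ← (Pi.basisFun ℝ (Fin d)).span_eq, Submodule.span_le]
    rintro _ ⟨i, rfl⟩
    have := vsub_mem_vectorSpan ℝ (hs i) h0
    simpa using this
  rw [adim, this, finrank_top]
  simp

/-- A point of a convex set at which every inequality is strict that is not tight on the whole
set. -/
lemma exists_generic {d : ℕ} {ι : Type} [Fintype ι] {f : ι → ((Fin d → ℝ) →ₗ[ℝ] ℝ)}
    {b : ι → ℝ} {F : Set (Fin d → ℝ)} (hF : Convex ℝ F) (hne : F.Nonempty)
    (hP : F ⊆ {x | ∀ j, f j x ≤ b j}) :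
    ∃ x ∈ F, ∀ j, (∃ y ∈ F, f j y ≠ b j) → f j x < b j := by
  classical
  suffices H : ∀ s : Finset ι, ∃ x ∈ F, ∀ j ∈ s, (∃ y ∈ F, f j y ≠ b j) → f j x < b j by
    obtain ⟨x, hx, h⟩ := H Finset.univ
    exact ⟨x, hx, fun j => h j (Finset.mem_univ j)⟩
  intro s
  induction s using Finset.induction_on with
  | empty => exact ⟨hne.some, hne.some_mem, by simp⟩
  | insert a s _ ih =>
    obtain ⟨x, hx, h⟩ := ih
    by_cases ha : ∃ y ∈ F, f a y ≠ b a
    · obtain ⟨y, hy, hya⟩ := ha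
      refine ⟨(1 / 2 : ℝ) • x + (1 / 2 : ℝ) • y,
        hF hx hy (by norm_num) (by norm_num) (by norm_num), fun j hj hne_j => ?_⟩
      have h1 := hP hx j
      have h2 := hP hy j
      simp only [map_add, map_smul, smul_eq_mul]
      rcases Finset.mem_insert.1 hj with rfl | hj
      · have := lt_of_le_of_ne h2 hya
        linarith
      · have := h j hj hne_j
        linarith
    · refine ⟨x, hx, fun j hj hne_j => ?_⟩
      rcases Finset.mem_insert.1 hj with rfl | hj
      · exact absurd hne_j ha
      · exact h j hj hne_j

/-- A nonempty face contains every point of the polytope at which all the inequalities tight on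
the face are tight: the segment from that point to a generic point of the face can be
prolonged. -/
lemma mem_face {d : ℕ} {ι : Type} [Fintype ι] {f : ι → ((Fin d → ℝ) →ₗ[ℝ] ℝ)}
    {b : ι → ℝ} {F : Set (Fin d → ℝ)} (hF : IsFaceOf {x | ∀ j, f j x ≤ b j} F)
    (hne : F.Nonempty) {y : Fin d → ℝ} (hy : ∀ j, f j y ≤ b j)
    (ht : ∀ j, (∀ x ∈ F, f j x = b j) → f j y = b j) : y ∈ F := by
  obtain ⟨x, hx, hg⟩ := exists_generic hF.1 hne hF.2.1
  obtain ⟨ε, hε, hmem⟩ : ∃ ε : ℝ, 0 < ε ∧ ∀ j, f j (x + ε • (x - y)) ≤ b j := by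
    suffices H : ∀ j, ∀ᶠ ε in nhdsWithin (0 : ℝ) (Set.Ioi 0), f j (x + ε • (x - y)) ≤ b j by
      have h := (Filter.eventually_all.2 H).and self_mem_nhdsWithin
      obtain ⟨ε, h1, h2⟩ := h.exists
      exact ⟨ε, h2, h1⟩
    intro j
    by_cases hj : ∀ x ∈ F, f j x = b j
    · refine Filter.Eventually.of_forall fun ε => ?_
      simp [hj x hx, ht j hj]
    · push Not at hj
      have hlt := hg j hj
      have hc : Filter.Tendsto (fun ε : ℝ => f j (x + ε • (x - y)))
          (nhdsWithin 0 (Set.Ioi 0)) (nhds (f j x)) := by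
        have : Continuous (fun ε : ℝ => f j (x + ε • (x - y))) := by
          simp only [map_add, map_smul, smul_eq_mul]; fun_prop
        have h := this.tendsto 0
        simp only [zero_smul, add_zero] at h
        exact h.mono_left nhdsWithin_le_nhds
      exact (hc.eventually_lt_const hlt).mono fun _ h => h.le
  refine hF.2.2 hy hmem hx ?_
  refine ⟨ε / (1 + ε), 1 / (1 + ε), by positivity, by positivity, by field_simp; ring, ?_⟩
  ext i
  simp
  field_simp
  ring

/-- A nonempty facet is cut out by a single inequality. -/
lemma facet_eq {d : ℕ} (hd : 0 < d) {ι : Type} [Fintype ι] {f : ι → ((Fin d → ℝ) →ₗ[ℝ] ℝ)}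
    {b : ι → ℝ} (hdim : adim {x | ∀ j, f j x ≤ b j} = d) {F : Set (Fin d → ℝ)}
    (hF : IsFaceOf {x | ∀ j, f j x ≤ b j} F)
    (hne : F.Nonempty) (hFd : adim F = d - 1) :
    ∃ j, F = {x | (∀ i, f i x ≤ b i) ∧ f j x = b j} := by
  obtain ⟨x₀, hx₀⟩ := hne
  have hker : ∀ j, (∀ x ∈ F, f j x = b j) → (affineSpan ℝ F).direction ≤ LinearMap.ker (f j) := by
    intro j hj
    rw [direction_affineSpan, vectorSpan_def, Submodule.span_le]
    rintro _ ⟨x, hx, y, hy, rfl⟩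
    simp [hj x hx, hj y hy]
  obtain ⟨j, hj, hfj⟩ : ∃ j, (∀ x ∈ F, f j x = b j) ∧ f j ≠ 0 := by
    by_contra! hcon
    have : F = {x | ∀ j, f j x ≤ b j} := by
      refine Set.Subset.antisymm hF.2.1 fun y hy => mem_face hF ⟨x₀, hx₀⟩ hy fun j hj => ?_
      rw [← hj x₀ hx₀, hcon j hj]; simp
    rw [this, hdim] at hFd
    omega
  have heq : (affineSpan ℝ F).direction = LinearMap.ker (f j) := by
    refine Submodule.eq_of_le_of_finrank_eq (hker j hj) ?_
    have h1 := Module.Dual.finrank_ker_add_one_of_ne_zero (f := f j) hfj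
    rw [Module.finrank_fin_fun] at h1
    change adim F = _
    omega
  refine ⟨j, Set.Subset.antisymm (fun x hx => ⟨hF.2.1 hx, hj x hx⟩) ?_⟩
  rintro y ⟨hy, hyj⟩
  refine mem_face hF ⟨x₀, hx₀⟩ hy fun k hk => ?_
  have hmem : y - x₀ ∈ LinearMap.ker (f j) := by simp [hyj, hj x₀ hx₀]
  have := hker k hk (heq ▸ hmem)
  rw [LinearMap.mem_ker, map_sub, hk x₀ hx₀] at this
  linarith

/-! ### Counting vertices and facets -/

lemma extremePoints_hull {d : ℕ} {V : Set (Fin d → ℝ)} (hV : V ⊆ ZeroOne d) :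
    (convexHull ℝ V).extremePoints ℝ = V := by
  refine Set.Subset.antisymm extremePoints_convexHull_subset fun v hv => ?_
  refine ⟨subset_convexHull ℝ _ hv, ?_⟩
  rintro x hx y hy ⟨s, t, hs, ht, hst, rfl⟩
  ext i
  have hxi := box_of_hull hV hx i
  have hyi := box_of_hull hV hy i
  have h := hV hv i
  simp only [Pi.add_apply, Pi.smul_apply, smul_eq_mul] at h ⊢
  obtain rfl : t = 1 - s := by linarith
  rcases h with h | h
  · rw [h]
    nlinarith [mul_nonneg hs.le hxi.1, mul_nonneg ht.le hyi.1]
  · rw [h]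
    nlinarith [mul_nonneg hs.le (sub_nonneg.2 hxi.2), mul_nonneg ht.le (sub_nonneg.2 hyi.2)]

/-- for `d + 1 ≤ n ≤ 2^d` there is a `d`-dimensional 0/1-polytope
in ℝ^d with exactly `n` vertices and at most `3d` facets. -/
theorem stmt17 (d n : ℕ) (hd : 0 < d) (hn : 0 < n)
    (h1 : d + 1 ≤ n) (h2 : n ≤ 2 ^ d) :
    ∃ V : Set (Fin d → ℝ), V ⊆ ZeroOne d ∧
      adim (convexHull ℝ V) = d ∧
      ((convexHull ℝ V).extremePoints ℝ).ncard = n ∧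
      Set.ncard {F : Set (Fin d → ℝ) |
          IsFaceOf (convexHull ℝ V) F ∧ adim F = d - 1} ≤ 3 * d := by
  obtain ⟨V, m, ⟨hV, h0, hs, hcard, ι, _, f, b, hm, hh⟩, hm3, hm1⟩ := exists_describes d n h1 h2
  have hdim : adim (convexHull ℝ V) = d :=
    adim_eq_of_unit (subset_convexHull ℝ _ h0) fun i => subset_convexHull ℝ _ (hs i)
  refine ⟨V, hV, hdim, by rw [extremePoints_hull hV, hcard], ?_⟩
  rw [hh] at hdim ⊢
  let G : ι → Set (Fin d → ℝ) := fun j => {x | (∀ i, f i x ≤ b i) ∧ f j x = b j}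
  have hG : (Set.range G).ncard ≤ m := by
    rw [← Set.image_univ]
    refine (Set.ncard_image_le Set.finite_univ).trans ?_
    rw [Set.ncard_univ, Nat.card_eq_fintype_card, hm]
  rcases Nat.lt_or_ge 1 d with h | h
  · refine (Set.ncard_le_ncard ?_ (Set.finite_range G)).trans (hG.trans hm3)
    rintro F ⟨hF, hFd⟩
    rcases F.eq_empty_or_nonempty with rfl | hne
    · -- The empty face has `adim` zero, which is `d - 1` only for `d = 1`.
      rw [adim, AffineSubspace.span_empty, AffineSubspace.direction_bot, finrank_bot] at hFd
      omega
    · obtain ⟨j, hj⟩ := facet_eq hd hdim hF hne hFd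
      exact ⟨j, hj.symm⟩
  · have hd1 : d = 1 := by omega
    have hm2 := hm1 hd1
    refine (Set.ncard_le_ncard (t := insert ∅ (Set.range G)) ?_
      ((Set.finite_range G).insert _)).trans ((Set.ncard_insert_le _ _).trans (by omega))
    rintro F ⟨hF, hFd⟩
    rcases F.eq_empty_or_nonempty with rfl | hne
    · exact Or.inl rfl
    · obtain ⟨j, hj⟩ := facet_eq hd hdim hF hne hFd
      exact Or.inr ⟨j, hj.symm⟩
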